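/- Let a, b be integers with b ≥ −1 and a ≥ b−1. Then F₂(a,b) = ∑_{i=0}^{b} ∑_{j=i}^{a+2b−2i} q^{j} t^{(a+2b−i)−j} in ℚ(q,t), where sums over empty integer ranges are zero. In particular F₂(a,b) is a polynomial in q and t with nonnegative integer coefficients. -/

import Mathlib

open Finset

noncomputable section

/-- The field `ℚ(q,t)` of rational functions in two variables over `ℚ`. -/
abbrev K : Type := FractionRing (MvPolynomial (Fin 2) ℚ)

/-- The variable `q` in `ℚ(q,t)`. -/
def q : K := algebraMap (MvPolynomial (Fin 2) ℚ) K (MvPolynomial.X 0)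

/-- The variable `t` in `ℚ(q,t)`. -/
def t : K := algebraMap (MvPolynomial (Fin 2) ℚ) K (MvPolynomial.X 1)

/-- `H₂(a,b)` as a function of the two variables `x`, `y` (so that interchanging the
arguments interchanges `q` and `t`):
`H₂(a,b;x,y) = x^{a+2b}/(1 − y/x²) + x^a y^b/(1 − x²/y)`. -/
def H₂ (a b : ℤ) (x y : K) : K :=
  x ^ (a + 2 * b) / (1 - y / x ^ 2) + x ^ a * y ^ b / (1 - x ^ 2 / y)

/-- `H₃(a,b,c;x,y)`, the head-like standard-tableau expansion for `n = 4`. -/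
def H₃ (a b c : ℤ) (x y : K) : K :=
  x ^ (a + 2 * b + 3 * c) / ((1 - y / x ^ 2) * (1 - y / x ^ 3))
    + x ^ (a + 2 * b) * y ^ c / ((1 - y / x ^ 2) * (1 - x ^ 3 / y))
    + x ^ (a + 2 * c) * y ^ b * (1 - y) / ((1 - y ^ 2 / x ^ 2) * (1 - x ^ 2 / y) * (1 - y / x))
    + x ^ a * y ^ (b + 2 * c) / ((1 - x ^ 2 / y ^ 2) * (1 - x / y))
    + x ^ (a + c) * y ^ (b + c) * (1 - x) / ((1 - x ^ 2 / y) * (1 - x / y) * (1 - y / x))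

/-- `F₁(m) = (q^{m+1} − t^{m+1})/(q − t)`, the function `F(a)` of the paper. -/
def F₁ (m : ℤ) : K := (q ^ (m + 1) - t ^ (m + 1)) / (q - t)

/-- `F₂(a,b) = H₂(a,b;q,t)/(1 − t/q) + H₂(a,b;t,q)/(1 − q/t)`. -/
def F₂ (a b : ℤ) : K := H₂ a b q t / (1 - t / q) + H₂ a b t q / (1 - q / t)

/-- `F₃(a,b,c) = H₃(a,b,c;q,t)/(1 − t/q) + H₃(a,b,c;t,q)/(1 − q/t)`. -/
def F₃ (a b c : ℤ) : K := H₃ a b c q t / (1 - t / q) + H₃ a b c t q / (1 - q / t)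

theorem alg_ne_aux (p r : MvPolynomial (Fin 2) ℚ)
    (h : MvPolynomial.eval ![2, 3] p ≠ MvPolynomial.eval ![2, 3] r) :
    algebraMap (MvPolynomial (Fin 2) ℚ) K p ≠ algebraMap (MvPolynomial (Fin 2) ℚ) K r := by
  intro e
  exact h (by rw [IsFractionRing.injective (MvPolynomial (Fin 2) ℚ) K e])

theorem q_ne_zero : q ≠ 0 := by
  have := alg_ne_aux (MvPolynomial.X 0) 0 (by simp)
  simpa [q] using this

theorem t_ne_zero : t ≠ 0 := by
  have := alg_ne_aux (MvPolynomial.X 1) 0 (by simp)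
  simpa [t] using this

theorem q_sub_t : q - t ≠ 0 := by
  have := alg_ne_aux (MvPolynomial.X 0) (MvPolynomial.X 1) (by norm_num)
  exact sub_ne_zero.mpr this

theorem q_sq_sub_t : q ^ 2 - t ≠ 0 := by
  have := alg_ne_aux (MvPolynomial.X 0 ^ 2) (MvPolynomial.X 1) (by norm_num)
  rw [map_pow] at this
  exact sub_ne_zero.mpr this

theorem t_sq_sub_q : t ^ 2 - q ≠ 0 := by
  have := alg_ne_aux (MvPolynomial.X 1 ^ 2) (MvPolynomial.X 0) (by norm_num)
  rw [map_pow] at this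
  exact sub_ne_zero.mpr this

theorem H₂_eq (a b : ℤ) (x y : K) (hx : x ≠ 0) (hy : y ≠ 0) (h : x ^ 2 - y ≠ 0) :
    H₂ a b x y = (x ^ (a + 2 * b) * x ^ 2 - x ^ a * y ^ b * y) / (x ^ 2 - y) := by
  have h1 : 1 - y / x ^ 2 = (x ^ 2 - y) / x ^ 2 := by field_simp
  have h2 : 1 - x ^ 2 / y = -((x ^ 2 - y) / y) := by field_simp; ring
  unfold H₂
  rw [h1, h2, div_neg, div_div_eq_mul_div, div_div_eq_mul_div]
  ring

theorem H₂_step (s b : ℤ) (x y : K) (hx : x ≠ 0) (hy : y ≠ 0) (h : x ^ 2 - y ≠ 0) :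
    H₂ (s - 2 * b) b x y = H₂ (s - 2 * (b - 1)) (b - 1) x y + x ^ (s - 2 * b) * y ^ b := by
  rw [H₂_eq _ _ _ _ hx hy h, H₂_eq _ _ _ _ hx hy h, div_add' _ _ _ h]
  congr 1
  have e1 : s - 2 * b + 2 * b = s := by ring
  have e2 : s - 2 * (b - 1) + 2 * (b - 1) = s := by ring
  have e3 : x ^ (s - 2 * (b - 1)) = x ^ (s - 2 * b) * x ^ 2 := by
    rw [← zpow_natCast x 2, ← zpow_add₀ hx]; congr 1; push_cast; ring
  have e4 : y ^ b = y ^ (b - 1) * y := by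
    rw [← zpow_add_one₀ hy]; congr 1; ring
  rw [e1, e2, e3, e4]
  ring

theorem geom_aux (x y : K) (hx : x ≠ 0) (hy : y ≠ 0) (i M : ℤ) (n : ℕ) :
    (x - y) * ∑ j ∈ Finset.Icc i (i + n - 1), x ^ j * y ^ (M - j)
      = x ^ (i + n) * y ^ (M - (i + n) + 1) - x ^ i * y ^ (M - i + 1) := by
  induction n with
  | zero => simp
  | succ n ih =>
    have : Finset.Icc i (i + ((n + 1 : ℕ) : ℤ) - 1)
        = insert (i + (n : ℤ)) (Finset.Icc i (i + n - 1)) := by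
      ext k; simp only [Finset.mem_insert, Finset.mem_Icc]; push_cast; omega
    rw [this, Finset.sum_insert (by simp), mul_add, ih]
    have e1 : x ^ (i + ((n + 1 : ℕ) : ℤ)) = x ^ (i + (n : ℤ)) * x := by
      rw [← zpow_add_one₀ hx]; congr 1; push_cast; ring
    have e2 : M - (i + ((n + 1 : ℕ) : ℤ)) + 1 = M - (i + n) := by push_cast; ring
    rw [e1, e2, zpow_add_one₀ hy (M - (i + n))]
    ring

theorem F₂_step (s b : ℤ) (h : 3 * b - 1 ≤ s) :
    F₂ (s - 2 * b) b = F₂ (s - 2 * (b - 1)) (b - 1)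
      + ∑ j ∈ Finset.Icc b (s - 2 * b), q ^ j * t ^ (s - b - j) := by
  have hq := q_ne_zero
  have ht := t_ne_zero
  have hqt := q_sub_t
  obtain ⟨n, hn⟩ := Int.eq_ofNat_of_zero_le (show 0 ≤ s - 3 * b + 1 by omega)
  have g := geom_aux q t hq ht b (s - b) n
  have r1 : b + (n : ℤ) - 1 = s - 2 * b := by omega
  have r2 : b + (n : ℤ) = s - 2 * b + 1 := by omega
  have r3 : s - b - (s - 2 * b + 1) + 1 = b := by ring
  have r4 : s - b - b + 1 = s - 2 * b + 1 := by ring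
  rw [r1, r2, r3, r4, zpow_add_one₀ hq, zpow_add_one₀ ht] at g
  have g' := eq_div_of_mul_eq hqt ((mul_comm _ _).trans g)
  rw [g']
  unfold F₂
  rw [H₂_step s b q t hq ht q_sq_sub_t, H₂_step s b t q ht hq t_sq_sub_q]
  have h1 : 1 - t / q = (q - t) / q := by field_simp
  have h2 : 1 - q / t = -((q - t) / t) := by field_simp; ring
  rw [h1, h2]
  simp only [div_neg, div_div_eq_mul_div]
  ring

theorem F₂_sum (s : ℤ) (n : ℕ) (h : 3 * ((n : ℤ) - 1) - 1 ≤ s) :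
    F₂ (s - 2 * ((n : ℤ) - 1)) ((n : ℤ) - 1)
      = ∑ i ∈ Finset.Icc (0 : ℤ) ((n : ℤ) - 1), ∑ j ∈ Finset.Icc i (s - 2 * i),
          q ^ j * t ^ (s - i - j) := by
  induction n with
  | zero =>
    have hz : ∀ x y : K, x ≠ 0 → y ≠ 0 → x ^ 2 - y ≠ 0 → H₂ (s + 2) (-1) x y = 0 := by
      intro x y hx hy hh
      rw [H₂_eq _ _ _ _ hx hy hh]
      have e1 : s + 2 + 2 * (-1) = s := by ring
      have e2 : x ^ (s + 2) = x ^ s * x ^ 2 := by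
        rw [← zpow_natCast x 2, ← zpow_add₀ hx]; rfl
      rw [e1, e2, zpow_neg_one, mul_assoc _ y⁻¹, inv_mul_cancel₀ hy]
      simp
    have e : s - 2 * (((0 : ℕ) : ℤ) - 1) = s + 2 := by push_cast; ring
    have e' : (((0 : ℕ) : ℤ) - 1) = -1 := by norm_num
    rw [e, e']
    unfold F₂
    rw [hz _ _ q_ne_zero t_ne_zero q_sq_sub_t, hz _ _ t_ne_zero q_ne_zero t_sq_sub_q]
    simp
  | succ n ih =>
    have e : ((n + 1 : ℕ) : ℤ) - 1 = n := by push_cast; ring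
    rw [e] at h ⊢
    have : Finset.Icc (0 : ℤ) n = insert (n : ℤ) (Finset.Icc 0 ((n : ℤ) - 1)) := by
      ext k; simp only [Finset.mem_insert, Finset.mem_Icc]; omega
    rw [F₂_step s n h, ih (by omega), this, Finset.sum_insert (by simp), add_comm]

theorem F₂_formula (a b : ℤ) (hb : -1 ≤ b) (hab : b - 1 ≤ a) :
    F₂ a b
      = (∑ i ∈ Finset.Icc (0 : ℤ) b, ∑ j ∈ Finset.Icc i (a + 2 * b - 2 * i),
          q ^ j * t ^ (a + 2 * b - i - j)) ∧
    ∃ p : MvPolynomial (Fin 2) ℕ,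
      F₂ a b = algebraMap (MvPolynomial (Fin 2) ℚ) K
        (MvPolynomial.map (Nat.castRingHom ℚ) p) := by
  have key : F₂ a b
      = (∑ i ∈ Finset.Icc (0 : ℤ) b, ∑ j ∈ Finset.Icc i (a + 2 * b - 2 * i),
          q ^ j * t ^ (a + 2 * b - i - j)) := by
    obtain ⟨n, hn⟩ := Int.eq_ofNat_of_zero_le (show 0 ≤ b + 1 by omega)
    obtain rfl : b = (n : ℤ) - 1 := by omega
    have := F₂_sum (a + 2 * ((n : ℤ) - 1)) n (by omega)
    rwa [add_sub_cancel_right] at this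
  refine ⟨key, ?_⟩
  rw [key]
  let φ : MvPolynomial (Fin 2) ℕ →+* K :=
    (algebraMap (MvPolynomial (Fin 2) ℚ) K).comp (MvPolynomial.map (Nat.castRingHom ℚ))
  have hq : q ∈ φ.rangeS := ⟨MvPolynomial.X 0, by simp [φ, q]⟩
  have ht : t ∈ φ.rangeS := ⟨MvPolynomial.X 1, by simp [φ, t]⟩
  have hmem : (∑ i ∈ Finset.Icc (0 : ℤ) b, ∑ j ∈ Finset.Icc i (a + 2 * b - 2 * i),
          q ^ j * t ^ (a + 2 * b - i - j)) ∈ φ.rangeS := by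
    refine sum_mem fun i hi => sum_mem fun j hj => ?_
    rw [Finset.mem_Icc] at hi hj
    obtain ⟨m, hm⟩ := Int.eq_ofNat_of_zero_le (show 0 ≤ j by omega)
    obtain ⟨k, hk⟩ := Int.eq_ofNat_of_zero_le (show 0 ≤ a + 2 * b - i - j by omega)
    rw [hk, hm, zpow_natCast, zpow_natCast]
    exact mul_mem (pow_mem hq _) (pow_mem ht _)
  obtain ⟨p, hp⟩ := hmem
  exact ⟨p, hp.symm⟩
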